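/- Let s,s' ∈ Stacks(Σ) with s' = Pop₂ᵏ(s) for some k ∈ ℕ, and let ρ be a run of a level-2 collapsible pushdown system. Then ρ ∈ Runs(s,s') and ρ does not visit a substack of s' before its final configuration if and only if ρ ∈ Runs(s,s') and ρ decomposes as ρ = ρ₁∘ρ₂∘⋯∘ρ_n where each ρ_i is of one of the following forms: (F1) ρ_i is a return; (F2) ρ_i is a 1-loop followed by a Collapse of collapse level 2; (F3) ρ_i is a 1-loop followed by a Pop₁ or a Collapse of collapse level 1, and there is j>i such that ρ_j is of form F2 and ρ_k is of form F3 for all i<k<j. -/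

import Mathlib

namespace CPG

/-! ## Level-2 collapsible pushdown stacks -/

/-- Stack letters: `Sum.inl σ` is a letter with a level-1 link,
`Sum.inr (σ, k)` is a letter with a level-2 link to the substack of width `k`. -/
abbrev Letter (A : Type) := A ⊕ (A × ℕ)

def symOf {A : Type} : Letter A → A
  | Sum.inl a => a
  | Sum.inr (a, _) => a

def lvlOf {A : Type} : Letter A → ℕ
  | Sum.inl _ => 1
  | Sum.inr _ => 2

abbrev Word (A : Type) := List (Letter A)

/-- A 2-word: a list of words; the last word is the topmost one. -/
abbrev Stack2 (A : Type) := List (Word A)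

/-- The initial level-2 stack `⊥₂`. -/
def bottom2 {A : Type} (bot : A) : Stack2 A := [[Sum.inl bot]]

def top2 {A : Type} (s : Stack2 A) : Option (Word A) := s.getLast?

def top1 {A : Type} (s : Stack2 A) : Option (Letter A) := s.getLast?.bind List.getLast?

def symS {A : Type} (s : Stack2 A) : Option A := (top1 s).map symOf

def lvlS {A : Type} (s : Stack2 A) : Option ℕ := (top1 s).map lvlOf

def lnkS {A : Type} (s : Stack2 A) : Option ℕ :=
  match top1 s, top2 s with
  | some (Sum.inr (_, j)), _ => some j
  | some (Sum.inl _), some w => some (w.length - 1)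
  | _, _ => none

def clone2 {A : Type} (s : Stack2 A) : Option (Stack2 A) :=
  (top2 s).map fun w => s ++ [w]

def push1 {A : Type} [DecidableEq A] (bot a : A) (s : Stack2 A) : Option (Stack2 A) :=
  if a = bot then none else (top2 s).map fun w => s.dropLast ++ [w ++ [Sum.inl a]]

def push2 {A : Type} [DecidableEq A] (bot a : A) (s : Stack2 A) : Option (Stack2 A) :=
  if a = bot then none else
    (top2 s).map fun w => s.dropLast ++ [w ++ [Sum.inr (a, s.length - 1)]]

def pop2 {A : Type} (s : Stack2 A) : Option (Stack2 A) :=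
  if 1 < s.length then some s.dropLast else none

def pop1 {A : Type} (s : Stack2 A) : Option (Stack2 A) :=
  match s.getLast? with
  | some w => if 1 < w.length then some (s.dropLast ++ [w.dropLast]) else none
  | none => none

def collapse {A : Type} (s : Stack2 A) : Option (Stack2 A) :=
  match top1 s with
  | some (Sum.inr (_, k)) => if 0 < k then some (s.take k) else none
  | some (Sum.inl _) => pop1 s
  | none => none

/-- The level-2 stack operations. -/
inductive Op (A : Type) where
  | clone2 | pop1 | pop2 | collapse
  | push1 (a : A) | push2 (a : A)

def applyOp {A : Type} [DecidableEq A] (bot : A) : Op A → Stack2 A → Option (Stack2 A)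
  | .clone2 => clone2
  | .pop1 => pop1
  | .pop2 => pop2
  | .collapse => collapse
  | .push1 a => push1 bot a
  | .push2 a => push2 bot a

/-- `Stacks(Σ)` : the smallest set containing `⊥₂` and closed under the operations. -/
inductive IsStack {A : Type} [DecidableEq A] (bot : A) : Stack2 A → Prop where
  | base : IsStack bot (bottom2 bot)
  | step {s t : Stack2 A} (op : Op A) : IsStack bot s → applyOp bot op s = some t →
      IsStack bot t

/-- Iterated application of a partial stack operation. -/
def iter {A : Type} (f : Stack2 A → Option (Stack2 A)) : ℕ → Stack2 A → Option (Stack2 A)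
  | 0, s => some s
  | n + 1, s => (f s).bind (iter f n)

/-- `t` is a substack of `s`: `t = Pop₁ⁿ(Pop₂ᵐ(s))`. -/
def Substack {A : Type} (t s : Stack2 A) : Prop :=
  ∃ n m, (iter pop2 m s).bind (iter pop1 n) = some t

def ProperSubstack {A : Type} (t s : Stack2 A) : Prop := Substack t s ∧ t ≠ s

/-- `s` is a prefix of `t` (`s ⊑ t`). -/
def StackPrefix {A : Type} (s t : Stack2 A) : Prop :=
  s ≠ [] ∧ s.length ≤ t.length ∧ s.dropLast <+: t ∧
    ∀ j, s.length - 1 ≤ j → j < t.length → s.getLastD [] <+: t.getD j []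

/-- `t[s/u]` : the stack obtained from `t` by replacing the prefix `s` by `u`. -/
def substPrefix {A : Type} (t s u : Stack2 A) : Stack2 A :=
  u.dropLast ++
    (t.drop (s.length - 1)).map fun v => u.getLastD [] ++ v.drop (s.getLastD []).length

/-! ## Collapsible pushdown systems and runs -/

/-- A level-2 collapsible pushdown system. -/
structure CPS (Q A Γ : Type) where
  bot : A
  q0 : Q
  Δ : Set (Q × A × Γ × Q × Op A)

variable {Q A Γ : Type} [DecidableEq A]

/-- A `γ`-labelled transition realized by the operation `op`. -/
def TransOp (S : CPS Q A Γ) (γ : Γ) (op : Op A) (c c' : Q × Stack2 A) : Prop :=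
  ∃ σ : A, symS c.2 = some σ ∧ (c.1, σ, γ, c'.1, op) ∈ S.Δ ∧
    applyOp S.bot op c.2 = some c'.2

def Trans (S : CPS Q A Γ) (γ : Γ) (c c' : Q × Stack2 A) : Prop :=
  ∃ op, TransOp S γ op c c'

/-- A run of a collapsible pushdown system (recording configurations, labels and
operations of each step). -/
structure Run (S : CPS Q A Γ) where
  len : ℕ
  cfg : ℕ → Q × Stack2 A
  lab : ℕ → Γ
  op : ℕ → Op A
  ok : ∀ i, i < len → TransOp S (lab i) (op i) (cfg i) (cfg (i + 1))

def Run.stk {S : CPS Q A Γ} (ρ : Run S) (i : ℕ) : Stack2 A := (ρ.cfg i).2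

/-- The word of labels along a run. -/
def Run.labels {S : CPS Q A Γ} (ρ : Run S) : List Γ :=
  List.ofFn fun i : Fin ρ.len => ρ.lab i

/-- `Reach_L`-reachability: a run from `c` to `c'` labelled by a word in `L`. -/
def ReachL (S : CPS Q A Γ) (L : Language Γ) (c c' : Q × Stack2 A) : Prop :=
  ∃ ρ : Run S, ρ.cfg 0 = c ∧ ρ.cfg ρ.len = c' ∧ ρ.labels ∈ L

/-- Plain reachability. -/
def Reach (S : CPS Q A Γ) (c c' : Q × Stack2 A) : Prop :=
  ∃ ρ : Run S, ρ.cfg 0 = c ∧ ρ.cfg ρ.len = c'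

/-! ## ε-contraction -/

def oneLetterLang (γ : Γ) : Language Γ := {[γ]}

def nonEpsLang (eps : Γ) : Language Γ := {w | ∃ γ : Γ, γ ≠ eps ∧ w = [γ]}

/-- The language `{ε}*`. -/
def epsStar (eps : Γ) : Language Γ := KStar.kstar (oneLetterLang eps)

/-- The language `({ε}*(Γ∖{ε}))*`. -/
def domLang (eps : Γ) : Language Γ :=
  KStar.kstar (epsStar eps * nonEpsLang eps)

/-- The language `{ε}*γ`. -/
def edgeLang (eps γ : Γ) : Language Γ := epsStar eps * oneLetterLang γ

/-- The vertex set of the ε-contraction `G/ε`. -/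
def EpsDomain (S : CPS Q A Γ) (eps : Γ) : Set (Q × Stack2 A) :=
  {c | ReachL S (domLang eps) (S.q0, bottom2 S.bot) c}

/-! ## (Generalised) milestones and the order ≪ -/

/-- `wordAt bot s i` is the word `wᵢ` of `s`, with the convention `w₀ = ⊥`. -/
def wordAt {A : Type} (bot : A) (s : Stack2 A) (i : ℕ) : Word A :=
  if i = 0 then [Sum.inl bot] else s.getD (i - 1) []

/-- Longest common prefix of two words. -/
def lcp {α : Type} [DecidableEq α] : List α → List α → List α
  | a :: s, b :: t => if a = b then a :: lcp s t else []
  | _, _ => []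

/-- `m` is a generalised milestone of `s`. -/
def GenMilestone (bot : A) (s m : Stack2 A) : Prop :=
  ∃ i v, i < s.length ∧ m = s.take i ++ [v] ∧
    lcp (wordAt bot s i) (wordAt bot s (i + 1)) <+: v ∧
    (v <+: wordAt bot s i ∨ v <+: wordAt bot s (i + 1))

/-- `m` is a milestone of `s`. -/
def Milestone (bot : A) (s m : Stack2 A) : Prop :=
  ∃ i v, i < s.length ∧ m = s.take i ++ [v] ∧
    lcp (wordAt bot s i) (wordAt bot s (i + 1)) <+: v ∧
    v <+: wordAt bot s (i + 1)

def genMilestones (bot : A) (s : Stack2 A) : Set (Stack2 A) := {m | GenMilestone bot s m}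

def milestones (bot : A) (s : Stack2 A) : Set (Stack2 A) := {m | Milestone bot s m}

/-- The base cases of the partial order `≪`. -/
def llBase (bot : A) (s t : Stack2 A) : Prop :=
  s.length < t.length ∨
    (s ≠ [] ∧ s.length = t.length ∧ s.dropLast = t.dropLast ∧
      ((t.getLastD [] <+: s.getLastD [] ∧ t.getLastD [] ≠ s.getLastD [] ∧
          s.getLastD [] <+: wordAt bot s (s.length - 1)) ∨
        (s.getLastD [] <+: t.getLastD [] ∧ s.getLastD [] ≠ t.getLastD [] ∧
          ¬ t.getLastD [] <+: wordAt bot s (s.length - 1))))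

/-- The order `≪`: the smallest reflexive transitive relation containing `llBase`. -/
def ll (bot : A) : Stack2 A → Stack2 A → Prop := Relation.ReflTransGen (llBase bot)

/-- `m'` is the ≪-successor of `m` within `genMilestones bot s`. -/
def LlSuccessor (bot : A) (s m m' : Stack2 A) : Prop :=
  GenMilestone bot s m ∧ GenMilestone bot s m' ∧ m ≠ m' ∧ ll bot m m' ∧
    ∀ m'', GenMilestone bot s m'' → ll bot m m'' → m'' ≠ m → ll bot m' m''

/-! ## Loops, returns and 1-loops -/

/-- The segment `[i,j]` of `ρ` is a loop (of its initial stack). -/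
def LoopSeg {S : CPS Q A Γ} (ρ : Run S) (i j : ℕ) : Prop :=
  i ≤ j ∧ j ≤ ρ.len ∧ ρ.stk j = ρ.stk i ∧
    (∀ k, i ≤ k → k ≤ j → ∀ t, pop2 (ρ.stk i) = some t → ¬ Substack (ρ.stk k) t) ∧
    (∀ k, i ≤ k → k ≤ j → ∀ m, 0 < m → ∀ t, iter pop1 m (ρ.stk i) = some t →
      ρ.stk k = t → ∀ m', m' < m → ∃ t', iter pop1 m' (ρ.stk i) = some t' ∧
        lvlS t' = some 1)

/-- A high loop: a loop that never visits `Pop₁` of its stack. -/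
def HighLoopSeg {S : CPS Q A Γ} (ρ : Run S) (i j : ℕ) : Prop :=
  LoopSeg ρ i j ∧ ∀ k, i ≤ k → k ≤ j → ∀ t, pop1 (ρ.stk i) = some t → ρ.stk k ≠ t

/-- A low loop: a loop whose second and second-to-last stacks are `Pop₁` of its stack. -/
def LowLoopSeg {S : CPS Q A Γ} (ρ : Run S) (i j : ℕ) : Prop :=
  LoopSeg ρ i j ∧ i < j ∧
    ∃ t, pop1 (ρ.stk i) = some t ∧ ρ.stk (i + 1) = t ∧ ρ.stk (j - 1) = t

/-- The common part of the definition of a return on the segment `[i,j]`: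
it leads from its initial stack `t` to `Pop₂(t)` and never visits a substack
of `Pop₂(t)` before its final configuration. -/
def RetShell {S : CPS Q A Γ} (ρ : Run S) (i j : ℕ) : Prop :=
  i < j ∧ j ≤ ρ.len ∧ pop2 (ρ.stk i) = some (ρ.stk j) ∧
    ∀ k, i ≤ k → k < j → ¬ Substack (ρ.stk k) (ρ.stk j)

/-- The segment `[i,j]` of `ρ` is a return (from its initial stack `t` to `Pop₂(t)`). -/
inductive RetSeg {S : CPS Q A Γ} (ρ : Run S) : ℕ → ℕ → Prop where
  | pop2 {i j : ℕ} (h : RetShell ρ i j) (hop : ρ.op (j - 1) = Op.pop2) : RetSeg ρ i j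
  | collapse {i j : ℕ} (h : RetShell ρ i j) (hop : ρ.op (j - 1) = Op.collapse)
      (hpre : ∃ w w', top2 (ρ.stk i) = some w ∧ top2 (ρ.stk (j - 1)) = some w' ∧
        w <+: w' ∧ w ≠ w') : RetSeg ρ i j
  | sub {i k j : ℕ} (h : RetShell ρ i j) (hik : i < k) (hkj : k ≤ j)
      (hpop : pop1 (ρ.stk i) = some (ρ.stk k)) (hret : RetSeg ρ k j) : RetSeg ρ i j

/-- The segment `[i,j]` of `ρ` is a level-1-loop. -/
def OneLoopSeg {S : CPS Q A Γ} (ρ : Run S) (i j : ℕ) : Prop :=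
  i ≤ j ∧ j ≤ ρ.len ∧
    ∃ (s : Stack2 A) (w : Word A) (s' : Stack2 A),
      ρ.stk i = s ++ [w] ∧ ρ.stk j = s ++ s' ++ [w] ∧
      (∀ k, i ≤ k → k ≤ j → s.length < (ρ.stk k).length) ∧
      (∀ k, i ≤ k → k ≤ j → 1 < w.length → top2 (ρ.stk k) = some w.dropLast →
        ∃ m, k < m ∧ m ≤ j ∧ RetSeg ρ k m)

/-! ## ExRet, ExLoop, ... -/

/-- `w↓₀` : replace every level-2 link by `0`. -/
def down0 {A : Type} : Word A → Word A :=
  List.map fun a => match a with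
    | Sum.inl x => Sum.inl x
    | Sum.inr (x, _) => Sum.inr (x, 0)

def ExRet (S : CPS Q A Γ) (w : Word A) : Set (Q × Q) :=
  {p | ∃ ρ : Run S, ρ.cfg 0 = (p.1, [down0 w, down0 w]) ∧
    ρ.cfg ρ.len = (p.2, [down0 w]) ∧ RetSeg ρ 0 ρ.len}

def ExLoop (S : CPS Q A Γ) (w : Word A) : Set (Q × Q) :=
  {p | ∃ ρ : Run S, ρ.cfg 0 = (p.1, [down0 w]) ∧ ρ.cfg ρ.len = (p.2, [down0 w]) ∧
    LoopSeg ρ 0 ρ.len}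

def ExHLoop (S : CPS Q A Γ) (w : Word A) : Set (Q × Q) :=
  {p | ∃ ρ : Run S, ρ.cfg 0 = (p.1, [down0 w]) ∧ ρ.cfg ρ.len = (p.2, [down0 w]) ∧
    HighLoopSeg ρ 0 ρ.len}

def ExLLoop (S : CPS Q A Γ) (w : Word A) : Set (Q × Q) :=
  {p | ∃ ρ : Run S, ρ.cfg 0 = (p.1, [down0 w]) ∧ ρ.cfg ρ.len = (p.2, [down0 w]) ∧
    LowLoopSeg ρ 0 ρ.len}

def ExOneLoop (S : CPS Q A Γ) (w : Word A) : Set (Q × Q) :=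
  {p | ∃ (ρ : Run S) (s' : Stack2 A), ρ.cfg 0 = (p.1, [down0 w]) ∧
    ρ.cfg ρ.len = (p.2, s' ++ [down0 w]) ∧ OneLoopSeg ρ 0 ρ.len}

/-! ## Finite binary trees -/

/-- Finite binary trees with labels in `α` and optional left/right children. -/
inductive PTree (α : Type) where
  | node (a : α) (l r : Option (PTree α)) : PTree α

/-- The label of the node at address `d` (`false` = left/0, `true` = right/1). -/
def PTree.labelAt {α : Type} : PTree α → List Bool → Option α
  | .node a _ _, [] => some a
  | .node _ (some t) _, false :: d => t.labelAt d
  | .node _ none _, false :: _ => none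
  | .node _ _ (some t), true :: d => t.labelAt d
  | .node _ _ none, true :: _ => none

def PTree.map {α β : Type} (f : α → β) : PTree α → PTree β
  | .node a l r =>
    .node (f a)
      (match l with | none => none | some t => some (t.map f))
      (match r with | none => none | some t => some (t.map f))

/-- Convolution of two trees, with `none` as padding symbol `□`. -/
def PTree.conv {α β : Type} : PTree α → PTree β → PTree (Option α × Option β)
  | .node a l r, .node b l' r' =>
    .node (some a, some b)
      (match l, l' with
        | none, none => none
        | some t, none => some (t.map fun x => (some x, none))
        | none, some u => some (u.map fun x => (none, some x))
        | some t, some u => some (PTree.conv t u))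
      (match r, r' with
        | none, none => none
        | some t, none => some (t.map fun x => (some x, none))
        | none, some u => some (u.map fun x => (none, some x))
        | some t, some u => some (PTree.conv t u))

/-- A (bottom-up nondeterministic) finite tree automaton. -/
structure TreeAut (α : Type) where
  St : Type
  fin : Finite St
  qI : St
  F : Set St
  Δ : Set (St × α × St × St)

/-- Acceptance of a finite tree by a tree automaton. -/
def TreeAut.Accepts {α : Type} (M : TreeAut α) (t : PTree α) : Prop :=
  ∃ ρ : List Bool → M.St,
    (∀ d, t.labelAt d = none → ρ d = M.qI) ∧
    (∀ d a, t.labelAt d = some a → (ρ d, a, ρ (d ++ [false]), ρ (d ++ [true])) ∈ M.Δ) ∧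
    ρ [] ∈ M.F

/-- A family of binary relations on `B` is tree-automatic. -/
def IsTreeAutomatic {B : Type} {I : Type} (E : I → B → B → Prop) : Prop :=
  ∃ (α : Type) (_ : Finite α) (AB : TreeAut α) (AE : I → TreeAut (Option α × Option α))
    (f : {t : PTree α // AB.Accepts t} → B),
    Function.Bijective f ∧
      ∀ (i : I) (t₁ t₂ : {t : PTree α // AB.Accepts t}),
        (AE i).Accepts (PTree.conv t₁.1 t₂.1) ↔ E i (f t₁) (f t₂)

/-! ## The encoding of configurations as trees -/

/-- Labels of encoding trees: a state, a pair (symbol, link level), or `ε`. -/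
abbrev EncLabel (Q A : Type) := Q ⊕ ((A × ℕ) ⊕ Unit)

def epsLab {Q A : Type} : EncLabel Q A := Sum.inr (Sum.inr ())

def symLab {Q A : Type} (τ : Letter A) : EncLabel Q A := Sum.inr (Sum.inl (symOf τ, lvlOf τ))

/-- Encoding of blocklines as trees (with a fuel parameter driving the recursion;
the fuel used in `encStack` is large enough so that it never runs out on actual
blocklines). The left subtree encodes the blockline induced by the first maximal
block, the right subtree the remaining blocks. -/
def encBL (Q : Type) {A : Type} [DecidableEq A] :
    ℕ → EncLabel Q A → List (Word A) → PTree (EncLabel Q A)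
  | 0, σ, _ => .node σ none none
  | _ + 1, σ, [] => .node σ none none
  | fuel + 1, σ, w :: rest =>
    if w.length ≤ 1 then
      match rest with
      | [] => .node σ none none
      | _ :: _ => .node σ none (some (encBL Q fuel epsLab rest))
    else
      let p : Word A → Bool := fun v => decide (v.take 2 = w.take 2)
      let blk := (w :: rest).takeWhile p
      let restBlk := (w :: rest).dropWhile p
      .node σ
        (some (encBL Q fuel
          (match w[1]? with | some τ' => symLab τ' | none => epsLab)
          (blk.map List.tail)))
        (match restBlk with
          | [] => none
          | _ :: _ => some (encBL Q fuel epsLab restBlk))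

/-- The total number of letters of a 2-word. -/
def size2 {A : Type} (s : Stack2 A) : ℕ := (s.map List.length).sum

/-- The encoding `Enc(s) = Enc(s, (⊥,1))` of a stack. -/
def encStack (Q : Type) {A : Type} [DecidableEq A] (bot : A) (s : Stack2 A) :
    PTree (EncLabel Q A) :=
  encBL Q (size2 s + 1) (Sum.inr (Sum.inl (bot, 1))) s

/-- The encoding of a configuration: the state at the root, `Enc(s)` as left subtree. -/
def Enc {Q A : Type} [DecidableEq A] (bot : A) (c : Q × Stack2 A) : PTree (EncLabel Q A) :=
  .node (Sum.inl c.1) (some (encStack Q bot c.2)) none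

/-- The class `EncTrees` of encoding trees. -/
def EncTrees (Q A : Type) (bot : A) : Set (PTree (EncLabel Q A)) :=
  {T | (∃ q : Q, T.labelAt [] = some (Sum.inl q)) ∧
    T.labelAt [true] = none ∧ T.labelAt [false] ≠ none ∧
    T.labelAt [false] = some (Sum.inr (Sum.inl (bot, 1))) ∧
    (∀ (d : List Bool) (x : EncLabel Q A),
      T.labelAt (false :: (d ++ [false])) = some x →
        ∃ (σ : A) (l : ℕ), σ ≠ bot ∧ (l = 1 ∨ l = 2) ∧ x = Sum.inr (Sum.inl (σ, l))) ∧
    (∀ (d : List Bool) (x : EncLabel Q A), T.labelAt (d ++ [true]) = some x → x = epsLab) ∧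
    (∀ (d : List Bool) (σ : A), ¬ (T.labelAt (d ++ [false]) = some (Sum.inr (Sum.inl (σ, 1))) ∧
      T.labelAt (d ++ [true, false]) = some (Sum.inr (Sum.inl (σ, 1)))))}

/-- Restriction of a tree to the nodes lexicographically ≤ `d`. -/
def restrictLex {α : Type} : PTree α → List Bool → PTree α
  | .node a _ _, [] => .node a none none
  | .node a l _, false :: d =>
      .node a (match l with | none => none | some t => some (restrictLex t d)) none
  | .node a l r, true :: d =>
      .node a l (match r with | none => none | some t => some (restrictLex t d))

/-- The lexicographic order on tree addresses. -/
def lexLe (d e : List Bool) : Prop :=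
  d <+: e ∨ ∃ (c x y : List Bool), d = c ++ false :: x ∧ e = c ++ true :: y

/-! ## Deterministic finite automata with output (Moore machines) -/

structure Moore (α ω : Type) where
  St : Type
  fin : Finite St
  init : St
  step : St → α → St
  out : St → ω

def Moore.output {α ω : Type} (M : Moore α ω) (w : List α) : ω :=
  M.out (w.foldl M.step M.init)

/-- Form F2: a 1-loop followed by a collapse of collapse level 2. -/
def F2Seg {Q A Γ : Type} [DecidableEq A] {S : CPS Q A Γ} (ρ : Run S) (i j : ℕ) : Prop :=
  ∃ m, i ≤ m ∧ j = m + 1 ∧ j ≤ ρ.len ∧ OneLoopSeg ρ i m ∧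
    ρ.op m = Op.collapse ∧ lvlS (ρ.stk m) = some 2

/-- Form F3 (without the side condition): a 1-loop followed by a `Pop₁` or a collapse
of collapse level 1. -/
def F3Seg {Q A Γ : Type} [DecidableEq A] {S : CPS Q A Γ} (ρ : Run S) (i j : ℕ) : Prop :=
  ∃ m, i ≤ m ∧ j = m + 1 ∧ j ≤ ρ.len ∧ OneLoopSeg ρ i m ∧
    (ρ.op m = Op.pop1 ∨ (ρ.op m = Op.collapse ∧ lvlS (ρ.stk m) = some 1))

/-- A decomposition `ρ = ρ₁∘⋯∘ρ_n` into segments of the forms F1, F2, F3. -/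
def FormDecomp {Q A Γ : Type} [DecidableEq A] {S : CPS Q A Γ} (ρ : Run S) : Prop :=
  ∃ (n : ℕ) (idx : ℕ → ℕ), idx 0 = 0 ∧ idx n = ρ.len ∧
    (∀ i, i < n → idx i ≤ idx (i + 1)) ∧
    ∀ i, i < n →
      RetSeg ρ (idx i) (idx (i + 1)) ∨
      F2Seg ρ (idx i) (idx (i + 1)) ∨
      (F3Seg ρ (idx i) (idx (i + 1)) ∧
        ∃ j, i < j ∧ j < n ∧ F2Seg ρ (idx j) (idx (j + 1)) ∧
          ∀ k, i < k → k < j → F3Seg ρ (idx k) (idx (k + 1)))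

/-! ## Auxiliary lemmas -/

/-- Case description of one stack operation. -/
lemma applyOp_cases {A : Type} [DecidableEq A] {bot : A} {op : Op A} {x y : Stack2 A}
    (h : applyOp bot op x = some y) :
    ∃ x0 z, x = x0 ++ [z] ∧
      ((op = Op.clone2 ∧ y = x0 ++ [z] ++ [z]) ∨
       (∃ b : Letter A, (op ≠ Op.pop1 ∧ op ≠ Op.collapse) ∧ y = x0 ++ [z ++ [b]] ∧ ∀ a m, b = Sum.inr (a, m) → m = x0.length) ∨
       (1 < z.length ∧ y = x0 ++ [z.dropLast] ∧
          (op = Op.pop1 ∨ (op = Op.collapse ∧ lvlS x = some 1))) ∨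
       (op = Op.pop2 ∧ y = x0 ∧ x0 ≠ []) ∨
       (∃ z0 a m, op = Op.collapse ∧ lvlS x = some 2 ∧ z = z0 ++ [Sum.inr (a, m)] ∧ 0 < m ∧
          y = x.take m)) := by
  rcases List.eq_nil_or_concat x with rfl | ⟨x0, z, hx⟩
  · exfalso
    cases op <;> simp [applyOp, clone2, CPG.pop1, CPG.pop2, collapse, CPG.push1, CPG.push2, top1, top2] at h
  · simp only [List.concat_eq_append] at hx
    subst hx
    refine ⟨x0, z, rfl, ?_⟩
    have hpop : ∀ {y'}, CPG.pop1 (x0 ++ [z]) = some y' → 1 < z.length ∧ y' = x0 ++ [z.dropLast] := by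
      intro y' h'
      simp only [CPG.pop1, List.getLast?_append, List.getLast?_singleton, Option.some_or] at h'
      split_ifs at h' with h1
      simp at h'
      exact ⟨h1, h'.symm⟩
    cases op with
    | clone2 =>
      simp [applyOp, clone2, top2] at h
      left; exact ⟨rfl, by simp [h]⟩
    | pop1 =>
      simp only [applyOp] at h
      obtain ⟨h1, h2⟩ := hpop h
      right; right; left
      exact ⟨h1, h2, Or.inl rfl⟩
    | pop2 =>
      simp only [applyOp, CPG.pop2] at h
      split_ifs at h with h1
      right; right; right; left
      refine ⟨rfl, ?_, ?_⟩
      · simpa using h.symm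
      · rintro rfl; simp at h1
    | collapse =>
      simp only [applyOp, collapse] at h
      rcases List.eq_nil_or_concat z with rfl | ⟨z0, b, hz⟩
      · simp [top1] at h
      · simp only [List.concat_eq_append] at hz
        subst hz
        have ht : top1 (x0 ++ [z0 ++ [b]]) = some b := by simp [top1]
        rw [ht] at h
        rcases b with b | ⟨a, m⟩
        · simp only at h
          obtain ⟨h1, h2⟩ := hpop h
          right; right; left
          exact ⟨h1, h2, Or.inr ⟨rfl, by simp [lvlS, ht, lvlOf]⟩⟩
        · simp only at h
          split_ifs at h with h1
          right; right; right; right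
          refine ⟨z0, a, m, rfl, by simp [lvlS, ht, lvlOf], rfl, h1, ?_⟩
          simpa using h.symm
    | push1 a =>
      simp only [applyOp, CPG.push1, top2] at h
      split_ifs at h with h1
      right; left
      refine ⟨Sum.inl a, by simp, ?_, by simp⟩
      simpa using h.symm
    | push2 a =>
      simp only [applyOp, CPG.push2, top2] at h
      split_ifs at h with h1
      right; left
      refine ⟨Sum.inr (a, x0.length), by simp, ?_, by simp⟩
      simpa using h.symm

/-- All level-2 links are at most the index of the word containing them. -/
def LinksOK {A : Type} (x : Stack2 A) : Prop :=
  ∀ l z, x[l]? = some z → ∀ a m, (Sum.inr (a, m) : Letter A) ∈ z → m ≤ l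

lemma LinksOK.step {A : Type} [DecidableEq A] {bot : A} {op : Op A} {x y : Stack2 A}
    (hx : LinksOK x) (h : applyOp bot op x = some y) : LinksOK y := by
  obtain ⟨x0, z, rfl, h⟩ := applyOp_cases h
  have hz : ∀ a m, (Sum.inr (a, m) : Letter A) ∈ z → m ≤ x0.length := by
    intro a m hm
    exact hx x0.length z (by simp) a m hm
  have h0 : LinksOK x0 := by
    intro l z' hl
    refine hx l z' ?_
    rw [List.getElem?_append_left (by grind)]; exact hl
  have key : ∀ z' : Word A, (∀ a m, (Sum.inr (a, m) : Letter A) ∈ z' → m ≤ x0.length) →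
      LinksOK (x0 ++ [z']) := by
    intro z' hz' l z'' hl a m hm
    rcases Nat.lt_or_ge l x0.length with h1 | h1
    · rw [List.getElem?_append_left h1] at hl
      exact h0 l z'' hl a m hm
    · have : l = x0.length := by grind
      subst this
      simp at hl
      subst hl
      exact hz' a m hm
  rcases h with ⟨_, rfl⟩ | ⟨b, _, rfl, hb⟩ | ⟨_, rfl, _⟩ | ⟨_, rfl, _⟩ | ⟨z0, a, m, _, _, _, _, rfl⟩
  · intro l z' hl a m hm
    rcases Nat.lt_or_ge l (x0 ++ [z]).length with h1 | h1
    · rw [List.getElem?_append_left h1] at hl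
      exact hx l z' hl a m hm
    · have : z' = z := by grind
      subst this
      have := hz a m hm
      simp at h1
      omega
  · apply key
    intro a m hm
    simp only [List.mem_append, List.mem_singleton] at hm
    rcases hm with hm | hm
    · exact hz a m hm
    · exact (hb a m hm.symm).le
  · apply key
    intro a m hm
    exact hz a m (List.mem_of_mem_dropLast hm)
  · exact h0
  · intro l z' hl
    refine hx l z' ?_
    grind

lemma linksOK_of_isStack {A : Type} [DecidableEq A] {bot : A} {x : Stack2 A}
    (h : IsStack bot x) : LinksOK x := by
  induction h with
  | base =>
    intro l z hl a m hm
    rcases l with _ | l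
    · simp [bottom2] at hl
      subst hl
      simp at hm
    · simp [bottom2] at hl
  | step op _ h ih => exact ih.step h

lemma isStack_ne_nil {A : Type} [DecidableEq A] {bot : A} {x : Stack2 A}
    (h : IsStack bot x) : x ≠ [] := by
  cases h with
  | base => simp [bottom2]
  | step op _ h =>
    obtain ⟨x0, z, rfl, h⟩ := applyOp_cases h
    rcases h with ⟨_, rfl⟩ | ⟨b, _, rfl, hb⟩ | ⟨_, rfl, _⟩ | ⟨_, rfl, h⟩ | ⟨z0, a, m, _, _, _, hm, rfl⟩
    · simp
    · simp
    · simp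
    · exact h
    · simp; omega

lemma length_iter_pop1 {A : Type} (n : ℕ) : ∀ {s t : Stack2 A}, iter pop1 n s = some t →
    t.length = s.length := by
  induction n with
  | zero => intro s t h; simp [iter] at h; simp [h]
  | succ n ih =>
    intro s t h
    simp only [iter, Option.bind_eq_some_iff] at h
    obtain ⟨r, h1, h2⟩ := h
    rw [ih h2]
    unfold pop1 at h1
    split at h1
    · rename_i w hw
      split_ifs at h1
      have : s ≠ [] := by rintro rfl; simp at hw
      have := List.length_pos_iff.2 this
      simp at h1
      subst h1
      simp; omega
    · simp at h1

lemma iter_pop2_take {A : Type} (n : ℕ) : ∀ {s t : Stack2 A}, iter pop2 n s = some t →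
    s ≠ [] → t ≠ [] ∧ t <+: s := by
  induction n with
  | zero => intro s t h hs; simp [iter] at h; subst h; exact ⟨hs, List.prefix_refl _⟩
  | succ n ih =>
    intro s t h hs
    simp only [iter, Option.bind_eq_some_iff] at h
    obtain ⟨r, h1, h2⟩ := h
    unfold pop2 at h1
    split_ifs at h1 with h3
    simp at h1
    subst h1
    obtain ⟨h4, h5⟩ := ih h2 (by intro h; have := congrArg List.length h; simp at this; omega)
    exact ⟨h4, h5.trans (List.dropLast_prefix s)⟩

lemma length_iter_pop2 {A : Type} (n : ℕ) : ∀ {s t : Stack2 A}, iter pop2 n s = some t →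
    t.length ≤ s.length := by
  induction n with
  | zero => intro s t h; simp [iter] at h; simp [h]
  | succ n ih =>
    intro s t h
    simp only [iter, Option.bind_eq_some_iff] at h
    obtain ⟨r, h1, h2⟩ := h
    unfold pop2 at h1
    split_ifs at h1 with h3
    simp at h1
    subst h1
    have := ih h2
    simp at this
    omega

lemma Substack.length_le {A : Type} {t s : Stack2 A} (h : Substack t s) :
    t.length ≤ s.length := by
  obtain ⟨n, m, h⟩ := h
  simp only [Option.bind_eq_some_iff] at h
  obtain ⟨r, h1, h2⟩ := h
  rw [length_iter_pop1 n h2]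
  exact length_iter_pop2 m h1

lemma substack_of_prefix {A : Type} : ∀ (n : ℕ) {t s : Stack2 A}, s.length = t.length + n →
    t ≠ [] → t <+: s → iter pop2 n s = some t := by
  intro n
  induction n with
  | zero =>
    intro t s hn h0 h
    have := h.eq_of_length (by omega)
    simp [iter, this]
  | succ n ih =>
    intro t s hn h0 h
    have h1 := List.length_pos_iff.2 h0
    simp only [iter, pop2]
    rw [if_pos (by omega)]
    simp only [Option.bind_some]
    apply ih (by simp; omega) h0
    obtain ⟨r, rfl⟩ := h
    rcases List.eq_nil_or_concat r with rfl | ⟨r, z, rfl⟩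
    · simp at hn
    · simp only [List.concat_eq_append, ← List.append_assoc, List.dropLast_concat]
      exact List.prefix_append _ _

lemma Substack.of_prefix {A : Type} {t s : Stack2 A} (h0 : t ≠ []) (h : t <+: s) :
    Substack t s := by
  refine ⟨0, s.length - t.length, ?_⟩
  rw [substack_of_prefix _ (by have := h.length_le; omega) h0 h]
  simp [iter]

lemma pop2_of_append {A : Type} {u : Stack2 A} {w : Word A} (h : u ≠ []) :
    pop2 (u ++ [w]) = some u := by
  have := List.length_pos_iff.2 h
  simp [pop2, h]

section Runs

variable {S : CPS Q A Γ} (ρ : Run S)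

lemma Run.step_cases {i : ℕ} (hi : i < ρ.len) :
    ∃ x0 z, ρ.stk i = x0 ++ [z] ∧
      ((ρ.op i = Op.clone2 ∧ ρ.stk (i+1) = x0 ++ [z] ++ [z]) ∨
       (∃ b : Letter A, (ρ.op i ≠ Op.pop1 ∧ ρ.op i ≠ Op.collapse) ∧ ρ.stk (i+1) = x0 ++ [z ++ [b]] ∧
          ∀ a m, b = Sum.inr (a, m) → m = x0.length) ∨
       (1 < z.length ∧ ρ.stk (i+1) = x0 ++ [z.dropLast] ∧
          (ρ.op i = Op.pop1 ∨ (ρ.op i = Op.collapse ∧ lvlS (ρ.stk i) = some 1))) ∨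
       (ρ.op i = Op.pop2 ∧ ρ.stk (i+1) = x0 ∧ x0 ≠ []) ∨
       (∃ z0 a m, ρ.op i = Op.collapse ∧ lvlS (ρ.stk i) = some 2 ∧
          z = z0 ++ [Sum.inr (a, m)] ∧ 0 < m ∧ ρ.stk (i+1) = (ρ.stk i).take m)) := by
  obtain ⟨σ, -, -, h⟩ := ρ.ok i hi
  exact applyOp_cases h

lemma Run.linksOK {i j : ℕ} (hij : i ≤ j) (hj : j ≤ ρ.len) (h : LinksOK (ρ.stk i)) :
    LinksOK (ρ.stk j) := by
  induction j, hij using Nat.le_induction with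
  | base => exact h
  | succ j hij ih =>
    obtain ⟨σ, -, -, h'⟩ := ρ.ok j (by omega)
    exact (ih (by omega)).step h'

/-- A step from a stack properly extending `u` keeps the prefix `u` or goes to a prefix of `u`. -/
lemma Run.step_prefix {i : ℕ} (hi : i < ρ.len) {u : Stack2 A} (hu : u <+: ρ.stk i)
    (hl : u.length < (ρ.stk i).length) :
    (u <+: ρ.stk (i+1) ∧ u.length < (ρ.stk (i+1)).length) ∨
    (ρ.stk (i+1) ≠ [] ∧ ρ.stk (i+1) <+: u) := by
  obtain ⟨x0, z, hx, h⟩ := ρ.step_cases hi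
  have hu0 : u <+: x0 := by
    rw [hx] at hu hl
    refine List.prefix_of_prefix_length_le hu (List.prefix_append _ _) ?_
    simp at hl; omega
  have hu1 := hu0.length_le
  rcases h with ⟨_, h⟩ | ⟨b, _, h, _⟩ | ⟨_, h, _⟩ | ⟨_, h, h0⟩ | ⟨z0, a, m, _, _, _, hm, h⟩
  · left; rw [h]; exact ⟨by rw [List.append_assoc]; exact hu0.trans (List.prefix_append _ _), by simp; omega⟩
  · left; rw [h]; exact ⟨hu0.trans (List.prefix_append _ _), by simp; omega⟩
  · left; rw [h]; exact ⟨hu0.trans (List.prefix_append _ _), by simp; omega⟩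
  · rw [h]
    rcases Nat.lt_or_ge u.length x0.length with h1 | h1
    · exact Or.inl ⟨hu0, h1⟩
    · right
      exact ⟨h0, (hu0.eq_of_length (by omega)) ▸ List.prefix_refl _⟩
  · rw [h]
    rcases Nat.lt_or_ge u.length m with h1 | h1
    · left
      refine ⟨List.prefix_of_prefix_length_le hu (List.take_prefix _ _) ?_, ?_⟩
      · simp; omega
      · simp; omega
    · right
      refine ⟨?_, List.prefix_of_prefix_length_le (List.take_prefix _ _) hu (by simp; omega)⟩
      rw [hx]; simp; omega

lemma Run.prefix_of_width {i j : ℕ} {u : Stack2 A} (hij : i ≤ j) (hj : j ≤ ρ.len)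
    (hu : u <+: ρ.stk i) (hw : ∀ k, i ≤ k → k ≤ j → u.length < (ρ.stk k).length) :
    u <+: ρ.stk j := by
  induction j, hij using Nat.le_induction with
  | base => exact hu
  | succ j hij ih =>
    have h1 := ih (by omega) (fun k h1 h2 => hw k h1 (by omega))
    rcases ρ.step_prefix (by omega) h1 (hw j hij (by omega)) with h | h
    · exact h.1
    · have := hw (j+1) (by omega) le_rfl
      have := h.2.length_le
      omega

lemma Run.width_of_not_substack {i j : ℕ} {u : Stack2 A} (hj : j ≤ ρ.len)
    (hu : u <+: ρ.stk i) (hl : u.length < (ρ.stk i).length)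
    (hn : ∀ k, i ≤ k → k < j → ¬ Substack (ρ.stk k) u) :
    ∀ k, i ≤ k → k < j → u <+: ρ.stk k ∧ u.length < (ρ.stk k).length := by
  intro k hik
  induction k, hik using Nat.le_induction with
  | base => intro _; exact ⟨hu, hl⟩
  | succ k hik ih =>
    intro hk
    obtain ⟨h1, h2⟩ := ih (by omega)
    rcases ρ.step_prefix (by omega) h1 h2 with h | h
    · exact h
    · exact absurd (Substack.of_prefix h.1 h.2) (hn _ (by omega) hk)

lemma RetSeg.shell {ρ : Run S} {i j : ℕ} (h : RetSeg ρ i j) : RetShell ρ i j := by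
  cases h <;> assumption

lemma RetShell.facts {ρ : Run S} {i j : ℕ} (h : RetShell ρ i j) :
    ρ.stk j <+: ρ.stk i ∧ ∀ k, i ≤ k → k < j → (ρ.stk j).length < (ρ.stk k).length := by
  obtain ⟨hij, hj, hp, hn⟩ := h
  unfold pop2 at hp
  split_ifs at hp with h1
  simp only [Option.some.injEq] at hp
  have hpre : ρ.stk j <+: ρ.stk i := hp ▸ List.dropLast_prefix _
  refine ⟨hpre, fun k h2 h3 => ?_⟩
  refine (ρ.width_of_not_substack hj hpre ?_ hn k h2 h3).2
  rw [← hp]; simp; omega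

end Runs

section Chains

variable {S : CPS Q A Γ}

/-- A sequence of segments of form F3 closed by a segment of form F2. -/
inductive Chain (ρ : Run S) : ℕ → ℕ → Prop where
  | last {i p : ℕ} (h : F2Seg ρ i p) : Chain ρ i p
  | cons {i k p : ℕ} (h : F3Seg ρ i k) (hc : Chain ρ k p) : Chain ρ i p

lemma Run.step_pop1 (ρ : Run S) {m : ℕ} (hm : m < ρ.len) {x : Stack2 A} {w : Word A}
    (hx : ρ.stk m = x ++ [w])
    (hop : ρ.op m = Op.pop1 ∨ (ρ.op m = Op.collapse ∧ lvlS (ρ.stk m) = some 1)) :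
    ρ.stk (m+1) = x ++ [w.dropLast] := by
  obtain ⟨x0, z, hx', h⟩ := ρ.step_cases hm
  obtain ⟨rfl, hz⟩ := List.append_inj' (hx.symm.trans hx') rfl
  simp at hz
  subst hz
  rcases h with ⟨h0, h⟩ | ⟨b, h0, h, _⟩ | ⟨_, h, _⟩ | ⟨h1, h, h0⟩ | ⟨z0, a, m, h1, h2, _, hm, h⟩
  · simp [h0] at hop
  · rcases hop with hop | hop
    · exact absurd hop h0.1
    · exact absurd hop.1 h0.2
  · exact h
  · simp [h1] at hop
  · simp [h1, h2] at hop

lemma Run.step_collapse (ρ : Run S) {m : ℕ} (hm : m < ρ.len) {x : Stack2 A} {w : Word A}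
    (hx : ρ.stk m = x ++ [w]) (hop : ρ.op m = Op.collapse) (hl : lvlS (ρ.stk m) = some 2) :
    ∃ a n, (Sum.inr (a, n) : Letter A) ∈ w ∧ 0 < n ∧ ρ.stk (m+1) = (x ++ [w]).take n := by
  obtain ⟨x0, z, hx', h⟩ := ρ.step_cases hm
  obtain ⟨rfl, hz⟩ := List.append_inj' (hx.symm.trans hx') rfl
  simp at hz
  subst hz
  rcases h with ⟨h0, h⟩ | ⟨b, h0, h, _⟩ | ⟨_, h, h1⟩ | ⟨h1, h, h0⟩ | ⟨z0, a, m, h1, h2, h3, hm, h⟩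
  · simp [h0] at hop
  · exact absurd hop h0.2
  · simp [hop, hl] at h1
  · simp [h1] at hop
  · exact ⟨a, m, by simp [h3], hm, hx ▸ h⟩

lemma Chain.facts {ρ : Run S} {i p : ℕ} (hc : Chain ρ i p) :
    ∀ (u x : Stack2 A) (w : Word A), ρ.stk i = u ++ x ++ [w] →
      (∀ a m, (Sum.inr (a, m) : Letter A) ∈ w → m ≤ u.length) →
      i < p ∧ p ≤ ρ.len ∧ ρ.stk p <+: u ∧ ∀ k, i ≤ k → k < p → u.length < (ρ.stk k).length := by
  induction hc with
  | last h =>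
    intro u x w hi hw
    obtain ⟨m, him, rfl, hlen, ⟨-, -, s, w', s', h1, h2, h3, -⟩, hop, hlvl⟩ := h
    obtain ⟨rfl, hz⟩ := List.append_inj' (h1.symm.trans hi) rfl
    simp at hz
    subst hz
    obtain ⟨a, n, hn, hn0, h4⟩ := ρ.step_collapse (by omega) h2 hop hlvl
    refine ⟨by omega, hlen, ?_, ?_⟩
    · rw [h4]
      have := hw a n hn
      refine List.prefix_of_prefix_length_le (List.take_prefix _ _)
        (l₂ := u) (l₃ := u ++ x ++ s' ++ [w']) ?_ (by simp; omega)
      simp only [List.append_assoc]; exact List.prefix_append _ _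
    · intro k hk hk'
      have := h3 k hk (by omega)
      simp at this
      omega
  | cons h hc ih =>
    intro u x w hi hw
    obtain ⟨m, him, rfl, hlen, ⟨-, -, s, w', s', h1, h2, h3, -⟩, hop⟩ := h
    obtain ⟨rfl, hz⟩ := List.append_inj' (h1.symm.trans hi) rfl
    simp at hz
    subst hz
    have h4 := ρ.step_pop1 (by omega) h2 hop
    obtain ⟨h5, h6, h7, h8⟩ := ih u (x ++ s') w'.dropLast (by rw [h4]; simp)
      (fun a m hm => hw a m (List.mem_of_mem_dropLast hm))
    refine ⟨by omega, h6, h7, fun k hk hk' => ?_⟩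
    rcases Nat.lt_or_ge k (m+1) with h9 | h9
    · have := h3 k hk (by omega)
      simp at this
      omega
    · exact h8 k h9 hk'

lemma chain_of_idx {ρ : Run S} {idx : ℕ → ℕ} (d : ℕ) : ∀ i,
    F2Seg ρ (idx (i + d)) (idx (i + d + 1)) →
    (∀ k, i ≤ k → k < i + d → F3Seg ρ (idx k) (idx (k + 1))) →
    Chain ρ (idx i) (idx (i + d + 1)) := by
  induction d with
  | zero => intro i h _; exact Chain.last h
  | succ d ih =>
    intro i h h'
    refine Chain.cons (h' i le_rfl (by omega)) ?_
    have := ih (i+1) (by convert h using 2 <;> omega) (fun k h1 h2 => h' k (by omega) (by omega))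
    convert this using 2
    omega

/-- Decompositions of the part of the run starting at position `i`. -/
inductive Dec (ρ : Run S) : ℕ → Prop where
  | nil : Dec ρ ρ.len
  | ret {i k : ℕ} (h : RetSeg ρ i k) (hd : Dec ρ k) : Dec ρ i
  | chain {i k : ℕ} (h : Chain ρ i k) (hd : Dec ρ k) : Dec ρ i

lemma Dec.of_formDecomp {ρ : Run S} (h : FormDecomp ρ) : Dec ρ 0 := by
  obtain ⟨n, idx, h0, hn, -, hf⟩ := h
  have key : ∀ d i, i + d = n → Dec ρ (idx i) := by
    intro d
    induction d using Nat.strong_induction_on with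
    | _ d ih =>
      intro i hi
      rcases Nat.eq_zero_or_pos d with rfl | hd
      · have : i = n := by omega
        rw [this, hn]; exact Dec.nil
      · rcases hf i (by omega) with h | h | ⟨h, j, hij, hj, h2, h3⟩
        · exact Dec.ret h (ih (d-1) (by omega) (i+1) (by omega))
        · exact Dec.chain (Chain.last h) (ih (d-1) (by omega) (i+1) (by omega))
        · obtain ⟨e, rfl⟩ := Nat.exists_eq_add_of_lt hij
          have hc := chain_of_idx (ρ := ρ) (idx := idx) (e+1) i h2 (by
            intro k h4 h5
            rcases Nat.eq_or_lt_of_le h4 with rfl | h4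
            · exact h
            · exact h3 k h4 (by omega))
          exact Dec.chain hc (ih (d - (e + 2)) (by omega) (i + (e+1) + 1) (by omega))
  rw [← h0]
  exact key n 0 (by omega)

lemma Dec.facts {ρ : Run S} {i : ℕ} (h : Dec ρ i) : LinksOK (ρ.stk i) → ρ.stk i ≠ [] →
    ρ.stk ρ.len <+: ρ.stk i ∧
      ∀ k, i ≤ k → k < ρ.len → (ρ.stk ρ.len).length < (ρ.stk k).length := by
  have main : ∀ {i k}, i < k → k ≤ ρ.len → ρ.stk k <+: ρ.stk i →
      (∀ l, i ≤ l → l < k → (ρ.stk k).length < (ρ.stk l).length) →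
      (LinksOK (ρ.stk k) → ρ.stk k ≠ [] → ρ.stk ρ.len <+: ρ.stk k ∧
      ∀ l, k ≤ l → l < ρ.len → (ρ.stk ρ.len).length < (ρ.stk l).length) →
      LinksOK (ρ.stk i) → ρ.stk i ≠ [] →
      ρ.stk ρ.len <+: ρ.stk i ∧
      ∀ k, i ≤ k → k < ρ.len → (ρ.stk ρ.len).length < (ρ.stk k).length := by
    intro i k hik hk hp hw ih hl h0
    have hne : ρ.stk k ≠ [] := by
      obtain ⟨k, rfl⟩ : ∃ k', k = k' + 1 := ⟨k - 1, by omega⟩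
      obtain ⟨x0, z, hx, h⟩ := ρ.step_cases (i := k) (by omega)
      rcases h with ⟨_, h⟩ | ⟨b, _, h, hb⟩ | ⟨_, h, _⟩ | ⟨_, h, h'⟩ | ⟨z0, a, m, _, _, _, hm, h⟩
      · simp [h]
      · simp [h]
      · simp [h]
      · rw [h]; exact h'
      · simp [h, hx]; omega
    obtain ⟨h1, h2⟩ := ih (ρ.linksOK hik.le hk hl) hne
    refine ⟨h1.trans hp, fun l h3 h4 => ?_⟩
    rcases Nat.lt_or_ge l k with h5 | h5
    · have := hw l h3 h5
      have := h1.length_le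
      omega
    · exact h2 l h5 h4
  induction h with
  | nil => intro _ _; exact ⟨List.prefix_refl _, fun k h1 h2 => by omega⟩
  | ret h hd ih =>
    have hs := h.shell
    exact main hs.1 hs.2.1 hs.facts.1 hs.facts.2 ih
  | @chain i k h hd ih =>
    intro hl h0
    rcases List.eq_nil_or_concat (ρ.stk i) with h1 | ⟨u, w, h1⟩
    · exact absurd h1 h0
    simp only [List.concat_eq_append] at h1
    obtain ⟨h2, h3, h4, h5⟩ := h.facts u [] w (by simp [h1]) (fun a m hm =>
      hl u.length w (by simp [h1]) a m hm)
    refine main h2 h3 (h4.trans (h1 ▸ List.prefix_append _ _)) (fun l h6 h7 => ?_) ih hl h0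
    exact lt_of_le_of_lt h4.length_le (h5 l h6 h7)

/-- `FormDecomp` for the part of the run starting at position `i`. -/
def FormFrom (ρ : Run S) (i₀ : ℕ) (n : ℕ) (idx : ℕ → ℕ) : Prop :=
  idx 0 = i₀ ∧ idx n = ρ.len ∧
    (∀ i, i < n → idx i ≤ idx (i + 1)) ∧
    ∀ i, i < n →
      RetSeg ρ (idx i) (idx (i + 1)) ∨
      F2Seg ρ (idx i) (idx (i + 1)) ∨
      (F3Seg ρ (idx i) (idx (i + 1)) ∧
        ∃ j, i < j ∧ j < n ∧ F2Seg ρ (idx j) (idx (j + 1)) ∧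
          ∀ k, i < k → k < j → F3Seg ρ (idx k) (idx (k + 1)))

/-- The index sequence with one more segment in front. -/
def consIdx (i : ℕ) (idx : ℕ → ℕ) : ℕ → ℕ
  | 0 => i
  | n + 1 => idx n

lemma FormFrom.cons {ρ : Run S} {i k n : ℕ} {idx : ℕ → ℕ} (h : FormFrom ρ k n idx) (hik : i ≤ k)
    (hs : RetSeg ρ i k ∨ F2Seg ρ i k ∨ (F3Seg ρ i k ∧ ∃ j, j < n ∧
      F2Seg ρ (idx j) (idx (j + 1)) ∧ ∀ k, k < j → F3Seg ρ (idx k) (idx (k + 1)))) :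
    FormFrom ρ i (n+1) (consIdx i idx) := by
  obtain ⟨h0, hn, hm, hf⟩ := h
  refine ⟨rfl, hn, ?_, ?_⟩
  · intro l hl
    rcases l with _ | l
    · simp [consIdx, h0, hik]
    · exact hm l (by omega)
  · intro l hl
    rcases l with _ | l
    · simp only [consIdx, h0]
      rcases hs with hs | hs | ⟨hs, j, hj, h1, h2⟩
      · exact Or.inl hs
      · exact Or.inr (Or.inl hs)
      · refine Or.inr (Or.inr ⟨hs, j+1, by omega, by omega, h1, ?_⟩)
        intro k' h3 h4
        obtain ⟨k', rfl⟩ : ∃ k'', k' = k'' + 1 := ⟨k' - 1, by omega⟩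
        exact h2 k' (by omega)
    · rcases hf l (by omega) with hs | hs | ⟨hs, j, hj, hjn, h1, h2⟩
      · exact Or.inl hs
      · exact Or.inr (Or.inl hs)
      · refine Or.inr (Or.inr ⟨hs, j+1, by omega, by omega, h1, ?_⟩)
        intro k' h3 h4
        obtain ⟨k', rfl⟩ : ∃ k'', k' = k'' + 1 := ⟨k' - 1, by omega⟩
        exact h2 k' (by omega) (by omega)

lemma F2Seg.le {ρ : Run S} {i k : ℕ} (h : F2Seg ρ i k) : i ≤ k := by
  obtain ⟨m, h1, h2, -⟩ := h; omega

lemma F3Seg.le {ρ : Run S} {i k : ℕ} (h : F3Seg ρ i k) : i ≤ k := by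
  obtain ⟨m, h1, h2, -⟩ := h; omega

lemma Chain.formFrom {ρ : Run S} {i k : ℕ} (h : Chain ρ i k)
    (hf : ∃ n idx, FormFrom ρ k n idx) :
    ∃ n idx, FormFrom ρ i n idx ∧ ∃ j, j < n ∧
      F2Seg ρ (idx j) (idx (j + 1)) ∧ ∀ k, k < j → F3Seg ρ (idx k) (idx (k + 1)) := by
  induction h with
  | @last i p h =>
    obtain ⟨n, idx, hf⟩ := hf
    refine ⟨n+1, consIdx i idx, hf.cons h.le (Or.inr (Or.inl h)), 0, by omega, ?_, by omega⟩
    simpa [consIdx, hf.1] using h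
  | @cons i k p h hc ih =>
    obtain ⟨n, idx, hf, j, hj, h2, h3⟩ := ih hf
    refine ⟨n+1, consIdx i idx, hf.cons h.le (Or.inr (Or.inr ⟨h, j, hj, h2, h3⟩)), j+1, by omega,
      h2, ?_⟩
    intro l hl
    rcases l with _ | l
    · simpa [consIdx, hf.1] using h
    · exact h3 l (by omega)

lemma Dec.formFrom {ρ : Run S} {i : ℕ} (h : Dec ρ i) : ∃ n idx, FormFrom ρ i n idx := by
  induction h with
  | nil => exact ⟨0, fun _ => ρ.len, rfl, rfl, by omega, by omega⟩
  | @ret i k h hd ih =>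
    obtain ⟨n, idx, hf⟩ := ih
    exact ⟨_, _, hf.cons h.shell.1.le (Or.inl h)⟩
  | chain h hd ih =>
    obtain ⟨n, idx, hf, -⟩ := h.formFrom ih
    exact ⟨n, idx, hf⟩

end Chains

section Forward

variable {S : CPS Q A Γ} (ρ : Run S)

lemma Run.stk_succ_ne_nil {k : ℕ} (hk : k < ρ.len) : ρ.stk (k+1) ≠ [] := by
  obtain ⟨x0, z, hx, h⟩ := ρ.step_cases hk
  rcases h with ⟨_, h⟩ | ⟨b, _, h, hb⟩ | ⟨_, h, _⟩ | ⟨_, h, h'⟩ | ⟨z0, a, m, _, _, _, hm, h⟩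
  · simp [h]
  · simp [h]
  · simp [h]
  · rw [h]; exact h'
  · simp [h, hx]; omega

/-- Letters created above `u` have links of size at least `|u|`. -/
lemma Run.link_inv {i j : ℕ} {u : Stack2 A} {w : Word A} (hij : i ≤ j) (hj : j ≤ ρ.len)
    (hi : ρ.stk i = u ++ [w]) (hw : ∀ k, i ≤ k → k ≤ j → u.length < (ρ.stk k).length) :
    ∀ l z, u.length ≤ l → (ρ.stk j)[l]? = some z → ∀ q a m, w.length ≤ q →
      z[q]? = some (Sum.inr (a, m)) → u.length ≤ m := by
  induction j, hij using Nat.le_induction with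
  | base =>
    intro l z hl hz q a m hq hz'
    rw [hi] at hz
    have : z = w := by grind
    grind
  | succ j hij ih =>
    have ih := ih (by omega) (fun k h1 h2 => hw k h1 (by omega))
    intro l z hl hz q a m hq hz'
    have hwj := hw j hij (by omega)
    obtain ⟨x0, v, hx, h⟩ := ρ.step_cases (i := j) (by omega)
    rw [hx] at hwj
    simp only [List.length_append, List.length_singleton] at hwj
    rcases Nat.lt_or_ge l x0.length with hl0 | hl0
    · refine ih l z hl ?_ q a m hq hz'
      rcases h with ⟨_, h⟩ | ⟨b, _, h, hb⟩ | ⟨_, h, _⟩ | ⟨_, h, h'⟩ | ⟨z0, a, m, _, _, _, hm, h⟩ <;>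
      rw [h] at hz <;> grind
    · have hv := ih x0.length v (by omega) (by simp [hx])
      rcases h with ⟨_, h⟩ | ⟨b, _, h, hb⟩ | ⟨_, h, _⟩ | ⟨_, h, h'⟩ | ⟨z0, a', m', _, _, _, hm, h⟩
      · have : z = v := by grind
        subst this
        exact hv q a m hq hz'
      · have : z = v ++ [b] := by grind
        subst this
        rcases Nat.lt_or_ge q v.length with h1 | h1
        · exact hv q a m hq (by rwa [List.getElem?_append_left h1] at hz')
        · have : b = Sum.inr (a, m) := by grind
          rw [hb a m this]
          omega
      · have : z = v.dropLast := by grind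
        subst this
        exact hv q a m hq (by grind)
      · grind
      · refine ih l z hl (by grind) q a m hq hz'

/-- At position `k` the word `w` on top of `x` is shortened by one letter, and the width stays
above `|x|` until `t`. -/
def Good (i : ℕ) (w : Word A) (t k : ℕ) (x : Stack2 A) : Prop :=
  i ≤ k ∧ k + 1 ≤ t ∧ ρ.stk k = x ++ [w] ∧ ρ.stk (k+1) = x ++ [w.dropLast] ∧ 1 < w.length ∧
    (ρ.op k = Op.pop1 ∨ (ρ.op k = Op.collapse ∧ lvlS (ρ.stk k) = some 1)) ∧
    ∀ r, k + 1 ≤ r → r ≤ t → x.length < (ρ.stk r).length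

lemma Good.extend {i t k : ℕ} {w : Word A} {x : Stack2 A} {ρ : Run S} (h : Good ρ i w t k x)
    {t' : ℕ} (htt : t ≤ t') (hr : ∀ r, t ≤ r → r ≤ t' → x.length < (ρ.stk r).length) :
    Good ρ i w t' k x := by
  obtain ⟨h1, h2, h3, h4, h5, h6, h7⟩ := h
  refine ⟨h1, by omega, h3, h4, h5, h6, fun r hr1 hr2 => ?_⟩
  rcases Nat.le_total r t with h | h
  · exact h7 r hr1 h
  · exact hr r h hr2

lemma prefix_dropLast_or {α : Type} {w z : List α} (h : w <+: z) : w = z ∨ w <+: z.dropLast := by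
  obtain ⟨r, rfl⟩ := h
  rcases List.eq_nil_or_concat r with rfl | ⟨r, b, rfl⟩
  · simp
  · right
    simp only [List.concat_eq_append, ← List.append_assoc, List.dropLast_concat]
    exact List.prefix_append _ _

lemma Run.good_inv {i j : ℕ} {u : Stack2 A} {w : Word A} (hij : i ≤ j) (hj : j ≤ ρ.len)
    (hi : ρ.stk i = u ++ [w]) (hw : ∀ k, i ≤ k → k ≤ j → u.length < (ρ.stk k).length) :
    ∀ l z, u.length ≤ l → (ρ.stk j)[l]? = some z → w <+: z ∨
      ∃ k x, Good ρ i w j k x ∧ x.length ≤ l := by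
  induction j, hij using Nat.le_induction with
  | base =>
    intro l z hl hz
    rw [hi] at hz
    have : z = w := by grind
    left; rw [this]
  | succ j hij ih =>
    have ih := ih (by omega) (fun k h1 h2 => hw k h1 (by omega))
    intro l z hl hz
    have hwj := hw j hij (by omega)
    obtain ⟨x0, v, hx, h⟩ := ρ.step_cases (i := j) (by omega)
    rw [hx] at hwj
    simp only [List.length_append, List.length_singleton] at hwj
    have hlt : l < (ρ.stk (j+1)).length := by grind
    have lift : ∀ l', l' ≤ l → l' < (ρ.stk j).length → (∃ k x, Good ρ i w j k x ∧ x.length ≤ l') →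
        ∃ k x, Good ρ i w (j+1) k x ∧ x.length ≤ l := by
      rintro l' hl' hlj ⟨k, x, hg, hxl⟩
      refine ⟨k, x, hg.extend (by omega) ?_, by omega⟩
      intro r hr1 hr2
      rcases Nat.eq_or_lt_of_le hr1 with rfl | hr1
      · omega
      · have : r = j + 1 := by omega
        subst this
        omega
    rcases Nat.lt_or_ge l x0.length with hl0 | hl0
    · have : (ρ.stk j)[l]? = some z := by
        rcases h with ⟨_, h⟩ | ⟨b, _, h, hb⟩ | ⟨_, h, _⟩ | ⟨_, h, h'⟩ | ⟨z0, a, m, _, _, _, hm, h⟩ <;>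
        rw [h] at hz <;> grind
      rcases ih l z hl this with h1 | h1
      · exact Or.inl h1
      · exact Or.inr (lift l le_rfl (by grind) h1)
    · have hv := ih x0.length v (by omega) (by simp [hx])
      have lift := lift x0.length hl0 (by simp [hx])
      rcases h with ⟨_, h⟩ | ⟨b, _, h, hb⟩ | ⟨hv1, h, hop⟩ | ⟨_, h, h'⟩ | ⟨z0, a', m', _, _, _, hm, h⟩
      · have : z = v := by grind
        subst this
        exact hv.imp id lift
      · have : z = v ++ [b] := by grind
        subst this
        exact hv.imp (fun h => h.trans (List.prefix_append _ _)) lift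
      · have hz1 : z = v.dropLast := by grind
        subst hz1
        rcases hv with hv | hv
        · rcases prefix_dropLast_or hv with rfl | hv
          · right
            refine ⟨j, x0, ⟨hij, le_rfl, hx, h, hv1, hop, ?_⟩, hl0⟩
            intro r hr1 hr2
            have : r = j + 1 := by omega
            subst this
            simp [h]
          · exact Or.inl hv
        · exact Or.inr (lift hv)
      · grind
      · have : z = v := by grind
        subst this
        exact hv.imp id lift

lemma Run.exists_first (P : ℕ → Prop) {a b : ℕ} (hab : a ≤ b) (ha : ¬ P a) (hb : P b) :
    ∃ m, a < m ∧ m ≤ b ∧ P m ∧ ∀ k, a ≤ k → k < m → ¬ P k := by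
  classical
  have hex : ∃ m, a ≤ m ∧ P m := ⟨b, hab, hb⟩
  refine ⟨Nat.find hex, ?_, Nat.find_min' hex ⟨hab, hb⟩, (Nat.find_spec hex).2, ?_⟩
  · rcases Nat.eq_or_lt_of_le (Nat.find_spec hex).1 with h | h
    · exact absurd (h ▸ (Nat.find_spec hex).2) ha
    · exact h
  · intro k h1 h2 h3
    exact Nat.find_min hex h2 ⟨h1, h3⟩

lemma split_prefix {α : Type} {u t x : List α} {w : α} (ht : t = x ++ [w]) (hu : u <+: t)
    (hl : u.length < t.length) : ∃ y, x = u ++ y := by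
  subst ht
  have : u <+: x := List.prefix_of_prefix_length_le hu (List.prefix_append _ _) (by simp at hl; omega)
  obtain ⟨y, rfl⟩ := this
  exact ⟨y, rfl⟩

lemma Run.retShell {i p : ℕ} {u : Stack2 A} {w : Word A} (hip : i < p) (hp : p ≤ ρ.len)
    (hi : ρ.stk i = u ++ [w]) (hu : ∀ k, i ≤ k → k < p → u.length < (ρ.stk k).length)
    (hpu : ρ.stk p = u) : RetShell ρ i p := by
  refine ⟨hip, hp, ?_, ?_⟩
  · rw [hi, hpu]
    apply pop2_of_append
    obtain ⟨q, rfl⟩ : ∃ q, p = q + 1 := ⟨p - 1, by omega⟩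
    rw [← hpu]
    exact ρ.stk_succ_ne_nil (by omega)
  · intro k h1 h2 h3
    have := h3.length_le
    have := hu k h1 h2
    rw [hpu] at *
    omega

/-- A run collapsing to below `u` from a top word properly extending the word `w` it started with
is a return. -/
lemma Run.ret_of_collapse {i q : ℕ} {u x0 : Stack2 A} {w z z0 : Word A} {a : A} {m : ℕ}
    (hiq : i ≤ q) (hq : q + 1 ≤ ρ.len)
    (hi : ρ.stk i = u ++ [w]) (hu : ∀ k, i ≤ k → k < q + 1 → u.length < (ρ.stk k).length)
    (hle : (ρ.stk (q+1)).length ≤ u.length)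
    (hop : ρ.op q = Op.collapse) (hx : ρ.stk q = x0 ++ [z]) (hz : z = z0 ++ [Sum.inr (a, m)])
    (hst : ρ.stk (q+1) = (ρ.stk q).take m) (hpre : w <+: z) (hne : w ≠ z) : RetSeg ρ i (q+1) := by
  have hpu : u <+: ρ.stk q := ρ.prefix_of_width hiq (by omega) (hi ▸ List.prefix_append _ _)
    (fun k h1 h2 => hu k h1 (by omega))
  have hlw : w.length < z.length := by
    rcases Nat.lt_or_ge w.length z.length with h | h
    · exact h
    · exact absurd (hpre.eq_of_length_le h) hne
  have hql := hu q hiq (by omega)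
  have hm : u.length ≤ m := by
    refine ρ.link_inv hiq (by omega) hi (fun k h1 h2 => hu k h1 (by omega)) x0.length z ?_
      (by simp [hx]) z0.length a m ?_ (by simp [hz])
    · rw [hx] at hql; simp at hql; omega
    · rw [hz] at hlw; simp at hlw; omega
  have hequ : ρ.stk (q+1) = u := by
    have h1 : (ρ.stk (q+1)).length = u.length := by
      rw [hst] at hle ⊢
      simp at hle ⊢
      omega
    rw [hst] at h1 ⊢
    exact (List.prefix_of_prefix_length_le (List.take_prefix _ _) hpu h1.le).eq_of_length h1
  refine RetSeg.collapse (ρ.retShell (by omega) hq hi hu hequ) (by simpa using hop) ?_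
  exact ⟨w, z, by simp [hi, top2], by simp [hx, top2], hpre, hne⟩

lemma Run.sub_ret {i k p : ℕ} {u : Stack2 A} {w : Word A} (hik : i < k) (hp : p ≤ ρ.len)
    (hi : ρ.stk i = u ++ [w]) (hu : ∀ k, i ≤ k → k < p → u.length < (ρ.stk k).length)
    (hk : ρ.stk k = u ++ [w.dropLast]) (h1 : 1 < w.length) (hr : RetSeg ρ k p) :
    RetSeg ρ i p := by
  have hs := hr.shell
  have hpu : ρ.stk p = u := by
    have := hs.2.2.1
    rw [hk] at this
    unfold CPG.pop2 at this
    split_ifs at this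
    simpa using this.symm
  refine RetSeg.sub (ρ.retShell (hik.trans hs.1) hp hi hu hpu) hik hs.1.le ?_ hr
  rw [hi, hk]
  simp [CPG.pop1, h1]

lemma Run.ret_or_chain : ∀ (N i p : ℕ) (u : Stack2 A) (w : Word A), p - i ≤ N → i < p →
    p ≤ ρ.len → ρ.stk i = u ++ [w] →
    (∀ k, i ≤ k → k < p → u.length < (ρ.stk k).length) → (ρ.stk p).length ≤ u.length →
    (∀ a m, (Sum.inr (a, m) : Letter A) ∈ w → m ≤ u.length) →
    RetSeg ρ i p ∨ (Chain ρ i p ∧ ∃ a m, (Sum.inr (a, m) : Letter A) ∈ w ∧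
      (ρ.stk p).length ≤ m) := by
  intro N
  induction N with
  | zero => intros; omega
  | succ N ih =>
    intro i p u w hN hip hp hi hu hpl hlk
    obtain ⟨q, rfl⟩ : ∃ q, p = q + 1 := ⟨p - 1, by omega⟩
    have hpre : ∀ k, i ≤ k → k ≤ q → u <+: ρ.stk k := fun k h1 h2 =>
      ρ.prefix_of_width h1 (by omega) (hi ▸ List.prefix_append _ _)
        (fun k h3 h4 => hu k h3 (by omega))
    have hsplit : ∀ k x v, i ≤ k → k ≤ q → ρ.stk k = x ++ [v] → ∃ y, x = u ++ y :=
      fun k x v h1 h2 h3 => split_prefix h3 (hpre k h1 h2) (hu k h1 (by omega))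
    have hlk' : ∀ a m, (Sum.inr (a, m) : Letter A) ∈ w.dropLast → m ≤ u.length :=
      fun a m h => hlk a m (List.mem_of_mem_dropLast h)
    -- visits of `Pop₁ w` that are left again start with returns
    have hret : ∀ k x e, i ≤ k → ρ.stk k = x ++ [w.dropLast] → e ≤ q →
        (∃ m, k < m ∧ m ≤ e ∧ (ρ.stk m).length ≤ x.length) →
        ∃ m, k < m ∧ m ≤ e ∧ RetSeg ρ k m := by
      rintro k x e hik hk he ⟨m', h1, h2, h3⟩
      obtain ⟨m, hm1, hm2, hm3, hm4⟩ := Run.exists_first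
        (fun m => (ρ.stk m).length ≤ x.length) h1.le (by simp [hk]) h3
      obtain ⟨y, rfl⟩ := hsplit k x _ hik (by omega) hk
      rcases ih k m (u ++ y) w.dropLast (by omega) hm1 (by omega) hk
        (fun l hl1 hl2 => not_le.1 (hm4 l hl1 hl2)) hm3
        (fun a n hn => by have := hlk' a n hn; simp; omega) with h | ⟨-, a, n, hn, hle⟩
      · exact ⟨m, hm1, by omega, h⟩
      · have := hlk' a n hn
        have := hu m (by omega) (by omega)
        omega
    obtain ⟨x0, z, hx, hstep⟩ := ρ.step_cases (i := q) (by omega)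
    have hql := hu q (by omega) (by omega)
    rw [hx] at hql
    simp only [List.length_append, List.length_singleton] at hql
    rcases hstep with ⟨_, h⟩ | ⟨b, _, h, hb⟩ | ⟨hv1, h, hop⟩ | ⟨hop, h, h'⟩ |
      ⟨z0, a, m, hop, hlvl, hz, hm, h⟩
    · rw [h] at hpl; simp at hpl; omega
    · rw [h] at hpl; simp at hpl; omega
    · rw [h] at hpl; simp at hpl; omega
    · left
      refine RetSeg.pop2 (ρ.retShell hip hp hi hu ?_) (by simpa using hop)
      rw [h] at hpl ⊢
      obtain ⟨y, hy⟩ := hsplit q x0 z (by omega) le_rfl hx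
      subst hy
      simp at hpl
      simp [hpl]
    · by_cases hwz : w <+: z
      · by_cases hweq : w = z
        · -- the case `z = w`
          subst hweq
          by_cases hdip : ∃ k x, i ≤ k ∧ k ≤ q ∧ ρ.stk k = x ++ [w.dropLast] ∧ 1 < w.length ∧
              ¬ ∃ m, k < m ∧ m ≤ q ∧ (ρ.stk m).length ≤ x.length
          · obtain ⟨k, x, hik, hkq, hk, hw1, hnd⟩ := hdip
            left
            push Not at hnd
            have hkw : ∀ l, k ≤ l → l < q + 1 → x.length < (ρ.stk l).length := by
              intro l h1 h2
              rcases Nat.eq_or_lt_of_le h1 with rfl | h1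
              · simp [hk]
              · exact hnd l h1 (by omega)
            obtain ⟨y, rfl⟩ := hsplit k x _ hik hkq hk
            have hd : w.dropLast = z0 := by simp [hz]
            have hr := ρ.ret_of_collapse hkq hp hk hkw (by simp; omega) hop hx hz h
              (List.dropLast_prefix w) (by rw [hd, hz]; simp)
            have hpe := hr.shell.2.2.1
            rw [hk] at hpe
            unfold CPG.pop2 at hpe
            split_ifs at hpe
            simp only [List.dropLast_concat, Option.some.injEq] at hpe
            rw [← hpe] at hpl
            have hy : y = [] := by simpa using hpl
            subst hy
            have hne : i ≠ k := by
              rintro rfl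
              rw [hi] at hk
              have := congrArg List.length (List.append_inj' hk rfl).2
              simp at hk
              have := congrArg List.length hk
              simp at this
              omega
            exact ρ.sub_ret (by omega) hp hi hu (by simpa using hk) hw1 hr
          · right
            push Not at hdip
            obtain ⟨y, hy⟩ := hsplit q x0 w (by omega) le_rfl hx
            refine ⟨Chain.last ⟨q, by omega, rfl, hp, ⟨by omega, by omega, u, w, y, hi, ?_, ?_, ?_⟩,
              hop, hlvl⟩, a, m, by simp [hz], by rw [h]; simp⟩
            · rw [hx, hy]
            · exact fun k h1 h2 => hu k h1 (by omega)
            · intro k h1 h2 h3 h4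
              obtain ⟨x, hxk⟩ := List.getLast?_eq_some_iff.1 h4
              exact hret k x q h1 hxk le_rfl (hdip k x h1 h2 hxk h3)
        · left
          exact ρ.ret_of_collapse (by omega) hp hi hu hpl hop hx hz h hwz hweq
      · -- the word `w` is popped
        have hex : ∃ k x, Good ρ i w q k x := by
          rcases ρ.good_inv (j := q) (by omega) (by omega) hi (fun k h1 h2 => hu k h1 (by omega))
            x0.length z (by omega) (by simp [hx]) with h1 | ⟨k, x, h1, -⟩
          · exact absurd h1 hwz
          · exact ⟨k, x, h1⟩
        classical
        obtain ⟨x, hg⟩ := Nat.find_spec hex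
        have hmin : ∀ k' x', Good ρ i w q k' x' → Nat.find hex ≤ k' :=
          fun k' x' h' => Nat.find_min' hex ⟨x', h'⟩
        generalize Nat.find hex = k at hg hmin
        obtain ⟨hik, hkq, hk, hk1, hw1, hkop, hkw⟩ := hg
        obtain ⟨y, rfl⟩ := hsplit k x w hik (by omega) hk
        have hF3 : F3Seg ρ i (k+1) := by
          refine ⟨k, hik, rfl, by omega, ⟨hik, by omega, u, w, y, hi, hk,
            fun l h1 h2 => hu l h1 (by omega), ?_⟩, hkop⟩
          intro l h1 h2 _ h4
          obtain ⟨x', hxl⟩ := List.getLast?_eq_some_iff.1 h4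
          refine hret l x' k h1 hxl (by omega) ?_
          by_contra hnd
          push Not at hnd
          have hlk2 : l < k := by
            rcases Nat.eq_or_lt_of_le h2 with rfl | h2
            · exfalso
              rw [hk] at hxl
              have h5 := (List.append_inj' hxl rfl).2
              simp only [List.cons.injEq, and_true] at h5
              have := congrArg List.length h5
              simp at this
              omega
            · exact h2
          have hxx : x'.length ≤ (u ++ y).length := by
            have := hnd k hlk2 le_rfl
            rw [hk] at this
            simp at this ⊢
            omega
          rcases ρ.good_inv (j := l) (by omega) (by omega) hi
            (fun k h1 h2 => hu k h1 (by omega)) x'.length w.dropLast (by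
              have := hu l h1 (by omega)
              rw [hxl] at this
              simp at this
              omega) (by simp [hxl]) with h5 | ⟨k', x'', h5, h6⟩
          · have := h5.length_le
            simp at this
            omega
          · have h7 : Good ρ i w q k' x'' := by
              refine h5.extend (by omega) ?_
              intro r hr1 hr2
              rcases Nat.eq_or_lt_of_le hr1 with rfl | hr1
              · rw [hxl]; simp; omega
              · rcases Nat.lt_or_ge k r with h8 | h8
                · have := hkw r h8 hr2
                  omega
                · have := hnd r hr1 h8
                  omega
            have := hmin _ _ h7
            have := h5.2.1
            omega
        rcases ih (k+1) (q+1) (u ++ y) w.dropLast (by omega) (by omega) hp hk1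
          (fun l h1 h2 => hkw l h1 (by omega)) (by simp; omega)
          (fun a n hn => by have := hlk' a n hn; simp; omega) with hr | ⟨hc, a', n, hn, hle⟩
        · left
          have hpe := hr.shell.2.2.1
          rw [hk1] at hpe
          unfold CPG.pop2 at hpe
          split_ifs at hpe
          simp only [List.dropLast_concat, Option.some.injEq] at hpe
          rw [← hpe] at hpl
          have hy : y = [] := by simpa using hpl
          subst hy
          exact ρ.sub_ret (by omega) hp hi hu (by simpa using hk1) hw1 hr
        · right
          exact ⟨Chain.cons hF3 hc, a', n, List.mem_of_mem_dropLast hn, hle⟩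

lemma Run.dec_of_not_substack {s' : Stack2 A} (hs' : s' ≠ []) (hend : ρ.stk ρ.len = s') :
    ∀ (N i : ℕ), ρ.len - i ≤ N → i ≤ ρ.len → LinksOK (ρ.stk i) → s' <+: ρ.stk i →
      (∀ k, i ≤ k → k < ρ.len → ¬ Substack (ρ.stk k) s') → Dec ρ i := by
  intro N
  induction N with
  | zero =>
    intro i h1 h2 _ _ _
    have : i = ρ.len := by omega
    rw [this]; exact Dec.nil
  | succ N ih =>
    intro i hN hi hl hpre hns
    rcases Nat.eq_or_lt_of_le hi with rfl | hi
    · exact Dec.nil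
    have hlt : s'.length < (ρ.stk i).length := by
      rcases Nat.lt_or_ge s'.length (ρ.stk i).length with h | h
      · exact h
      · have := hpre.eq_of_length_le h
        exact absurd (this ▸ Substack.of_prefix hs' (List.prefix_refl _)) (hns i le_rfl hi)
    rcases List.eq_nil_or_concat (ρ.stk i) with h1 | ⟨u, w, h1⟩
    · simp [h1] at hlt
    simp only [List.concat_eq_append] at h1
    have hsu : s'.length ≤ u.length := by rw [h1] at hlt; simp at hlt; omega
    obtain ⟨p, hp1, hp2, hp3, hp4⟩ := Run.exists_first
        (fun m => (ρ.stk m).length ≤ u.length) hi.le (by simp [h1]) (by simpa [hend] using hsu)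
    have hp4 : ∀ k, i ≤ k → k < p → u.length < (ρ.stk k).length :=
      fun k h2 h3 => not_le.1 (hp4 k h2 h3)
    have hdec : Dec ρ p := by
      refine ih p (by omega) hp2 (ρ.linksOK hp1.le hp2 hl) ?_
        (fun k h2 h3 => hns k (by omega) h3)
      rcases Nat.eq_or_lt_of_le hp2 with rfl | hp2
      · rw [hend]
      · exact (ρ.width_of_not_substack le_rfl hpre hlt hns p hp1.le hp2).1
    rcases ρ.ret_or_chain _ i p u w le_rfl hp1 hp2 h1 hp4 hp3
      (fun a m hm => hl u.length w (by simp [h1]) a m hm) with h | ⟨h, -⟩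
    · exact Dec.ret h hdec
    · exact Dec.chain h hdec

end Forward

/-- For `s' = Pop₂ᵏ(s)`, a run `ρ ∈ Runs(s,s')` does not visit a
substack of `s'` before its final configuration iff it decomposes into segments of
the forms F1, F2, F3. -/
theorem form_decomposition
    {Q A Γ : Type} [DecidableEq A] (S : CPS Q A Γ)
    (s s' : Stack2 A) (hs : IsStack S.bot s)
    (k : ℕ) (hss' : iter pop2 k s = some s')
    (ρ : Run S) :
    (ρ.stk 0 = s ∧ ρ.stk ρ.len = s' ∧ ∀ i, i < ρ.len → ¬ Substack (ρ.stk i) s') ↔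
    (ρ.stk 0 = s ∧ ρ.stk ρ.len = s' ∧ FormDecomp ρ) := by
  constructor
  · rintro ⟨h0, h1, h2⟩
    refine ⟨h0, h1, ?_⟩
    obtain ⟨hne, hpre⟩ := iter_pop2_take k hss' (isStack_ne_nil hs)
    have hd : Dec ρ 0 := ρ.dec_of_not_substack hne h1 _ 0 le_rfl (Nat.zero_le _)
      (h0 ▸ linksOK_of_isStack hs) (h0 ▸ hpre) (fun k _ hk => h2 k hk)
    exact hd.formFrom
  · rintro ⟨h0, h1, h2⟩
    refine ⟨h0, h1, fun i hi hsub => ?_⟩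
    have := ((Dec.of_formDecomp h2).facts (h0 ▸ linksOK_of_isStack hs)
      (h0 ▸ isStack_ne_nil hs)).2 i (Nat.zero_le _) hi
    have := hsub.length_le
    rw [h1] at *
    omega

end CPG
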